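/- Let h̃₀, ℓ and d_ℓ be as follows: h̃₀(x,ξ) := −Σ_{η∈ℤ^d} ã_η(x) cosh(η·ξ) − V₀(x) with ã smooth coefficients satisfying ã_η(x) ≤ 0 for η ≠ 0, ã_η(x) = ã_{−η}(x), span{η : ã_η(x) < 0} = ℝ^d, Σ_η e^{c|η|} sup_{x∈K}|∂_x^β ã_η(x)| < ∞ for all c > 0, compact K, multi-index β, and V₀ ∈ C^∞(ℝ^d), V₀ ≥ 0, V₀(x) = 0 exactly at x = 0 with nondegenerate minimum; ℓ(x,v) := ξ_{h̃₀}(x, λ(x,v)v)·v the Finsler function of h̃₀ at energy 0 (ξ_{h̃₀}(x,·) = (∇_ξ h̃₀(x,·))^{-1}, λ(x,v) > 0 the unique number with h̃₀(x, ξ_{h̃₀}(x, λ(x,v)v)) = 0), extended by ℓ(0,·) = 0; d_ℓ(x,y) := inf ∫_0^1 ℓ(γ,γ̇) dt over regular C² curves from x to y; d⁰(x) := d_ℓ(0,x). Then at every point x ≠ 0 at which d⁰ is differentiable, the eikonal inequality h̃₀(x, ∇d⁰(x)) ≤ 0 holds; in particular, since d⁰ is locally Lipschitz, the inequality holds almost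 everywhere in ℝ^d. -/

import Mathlib

open scoped RealInnerProductSpace Classical
noncomputable section

/-- `ℝ^d` as a Euclidean space. -/
abbrev Ed (d : ℕ) := EuclideanSpace ℝ (Fin d)

/-- The lattice vector `η ∈ ℤ^d` regarded as a vector of `ℝ^d`. -/
def zv {d : ℕ} (η : Fin d → ℤ) : Ed d :=
  (EuclideanSpace.equiv (Fin d) ℝ).symm (fun i => (η i : ℝ))

/-
Convexity makes `ℓ(x, ·)` the support function of the compact convex sublevel set
`{ξ | h̃₀(x, ξ) ≤ 0}`: a boundary point at which the gradient of `h̃₀(x, ·)` is a positive multiple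
of `v` maximizes `ξ · v` over that set. By Hahn-Banach, `ξ` lies in the sublevel set as soon as
`ξ · v ≤ ℓ(x, v)` for every `v`. For `ξ = ∇d⁰(x)` this follows by difference quotients from
`d⁰(x + w) ≤ d⁰(x) + sup ℓ(·, w)`, the supremum being over a ball around `x`, which in turn is
obtained by bending the final part of an almost minimizing curve towards `x + w`. Bending may create
points of zero velocity. In dimension greater than one they are removed by a small perturbation,
whereas in dimension one a curve is monotone and can be stopped early. The same estimate shows that
`d⁰` is locally Lipschitz away from `0`, so that Rademacher's theorem applies.
-/

open Set Filter Topology MeasureTheory Metric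

section Calculus

variable {E F : Type*} [NormedAddCommGroup E] [NormedSpace ℝ E] [FiniteDimensional ℝ E]
  [NormedAddCommGroup F] [NormedSpace ℝ F]

theorem dense_compl_image_of_contDiffAt (hE : 1 < Module.finrank ℝ E) {f : ℝ → E} {s : Set ℝ}
    (hf : ∀ t ∈ s, ContDiffAt ℝ 1 f t) : Dense (f '' s)ᶜ := by
  have hLip : ∀ t ∈ s, ∃ C, ∃ u ∈ 𝓝[s] t, LipschitzOnWith C f u := fun t ht =>
    have ⟨C, u, hu, hCu⟩ := (hf t ht).exists_lipschitzOnWith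
    ⟨C, u, mem_nhdsWithin_of_mem_nhds hu, hCu⟩
  have hdim : dimH (f '' s) ≤ 1 :=
    (dimH_image_le_of_locally_lipschitzOn hLip).trans
      ((dimH_mono (subset_univ s)).trans_eq Real.dimH_univ)
  exact dense_compl_of_dimH_lt_finrank (hdim.trans_lt (by exact_mod_cast hE))

theorem le_of_hasDerivAt_of_eventually_le {g : ℝ → ℝ} {g' c t : ℝ} (hg : HasDerivAt g g' t)
    (h : ∀ᶠ ε in 𝓝[>] 0, g (t + ε) ≤ g t + ε * c) : g' ≤ c := by
  refine le_of_tendsto (hg.tendsto_slope_zero.mono_left (nhdsGT_le_nhdsNE 0)) ?_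
  filter_upwards [h, self_mem_nhdsWithin] with ε hε hpos
  rw [smul_eq_mul, inv_mul_le_iff₀ hpos]
  linarith

theorem ae_differentiableAt_of_locallyLipschitzOn [FiniteDimensional ℝ F] [MeasurableSpace E]
    [BorelSpace E] (μ : Measure E) [μ.IsAddHaarMeasure] {f : E → F} {U : Set E} (hU : IsOpen U)
    (hf : LocallyLipschitzOn U f) : ∀ᵐ x ∂μ, x ∈ U → DifferentiableAt ℝ f x := by
  refine measure_null_of_locally_null _ fun x hx => ?_
  obtain ⟨hxU, -⟩ := Classical.not_imp.1 hx
  obtain ⟨C, t, ht, hCt⟩ := hf hxU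
  rw [hU.nhdsWithin_eq hxU] at ht
  refine ⟨_, inter_mem_nhdsWithin _ (interior_mem_nhds.2 ht), ?_⟩
  have hdiff : ∀ᵐ y ∂μ, y ∈ interior t → DifferentiableAt ℝ f y := by
    filter_upwards [(hCt.mono interior_subset).ae_differentiableWithinAt_of_mem] with y hy hyt
    exact (hy hyt).differentiableAt (isOpen_interior.mem_nhds hyt)
  refine measure_mono_null ?_ (ae_iff.1 hdiff)
  exact fun y ⟨hyU, hyt⟩ hy => hyU fun _ => hy hyt

end Calculus

section Curves

variable {E : Type*} [NormedAddCommGroup E] [NormedSpace ℝ E]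
  {γ σ : ℝ → E} {x y : E} {U : Set E} {ℓ : E → E → ℝ} {b τ : ℝ}

/-- The restriction of `γ` to `[0, 1]` is a regular `C²` curve from `x` to `y`. Velocities are
two-sided derivatives, so that regularity at the end points is a condition on an extension of the
curve. -/
structure IsRegularCurve (γ : ℝ → E) (x y : E) : Prop where
  contDiffOn : ContDiffOn ℝ 2 γ (Icc 0 1)
  map_zero : γ 0 = x
  map_one : γ 1 = y
  deriv_ne_zero : ∀ t ∈ Icc (0 : ℝ) 1, deriv γ t ≠ 0

/-- The length of the curve `γ : [0, 1] → E` for the integrand `ℓ`; it is `0` when the integral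
diverges. -/
def finslerLength (ℓ : E → E → ℝ) (γ : ℝ → E) : ℝ :=
  ∫ t in (0 : ℝ)..1, ℓ (γ t) (deriv γ t)

/-- The distance `d_ℓ` associated with the integrand `ℓ`: the infimum of the lengths of regular
`C²` curves between two points. -/
def finslerDist (ℓ : E → E → ℝ) (x y : E) : ℝ :=
  sInf (finslerLength ℓ '' {γ | IsRegularCurve γ x y})

/-- `ℓ` is a family of sublinear gauges, jointly continuous over `U`. Outside `U` the gauges may
be discontinuous in the base point, and nowhere are they required to be definite. -/
structure IsFinslerOn (U : Set E) (ℓ : E → E → ℝ) : Prop where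
  nonneg : ∀ x v, 0 ≤ ℓ x v
  smul : ∀ x v, ∀ c ≥ 0, ℓ x (c • v) = c * ℓ x v
  add_le : ∀ x v w, ℓ x (v + w) ≤ ℓ x v + ℓ x w
  continuousAt : ∀ x ∈ U, ∀ v, ContinuousAt (fun q : E × E => ℓ q.1 q.2) (x, v)

theorem finslerDist_eq_sInf (ℓ : E → E → ℝ) (x y : E) :
    finslerDist ℓ x y = sInf {L : ℝ | ∃ γ : ℝ → E, ContDiffOn ℝ 2 γ (Icc 0 1) ∧ γ 0 = x ∧
      γ 1 = y ∧ (∀ t ∈ Icc (0 : ℝ) 1, deriv γ t ≠ 0) ∧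
      L = ∫ t in (0 : ℝ)..1, ℓ (γ t) (deriv γ t)} := by
  unfold finslerDist
  congr 1
  ext L
  constructor
  · rintro ⟨γ, h, rfl⟩
    exact ⟨γ, h.contDiffOn, h.map_zero, h.map_one, h.deriv_ne_zero, rfl⟩
  · rintro ⟨γ, hγ, h₀, h₁, hne, rfl⟩
    exact ⟨γ, ⟨hγ, h₀, h₁, hne⟩, rfl⟩

theorem isRegularCurve_lineMap (hxy : x ≠ y) :
    IsRegularCurve (AffineMap.lineMap x y : ℝ → E) x y where
  contDiffOn := (AffineMap.contDiff_lineMap x y).contDiffOn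
  map_zero := AffineMap.lineMap_apply_zero x y
  map_one := AffineMap.lineMap_apply_one x y
  deriv_ne_zero t _ := by
    rw [AffineMap.hasDerivAt_lineMap.deriv]
    exact sub_ne_zero.2 hxy.symm

namespace IsRegularCurve

theorem differentiableAt (h : IsRegularCurve γ x y) {t : ℝ} (ht : t ∈ Icc (0 : ℝ) 1) :
    DifferentiableAt ℝ γ t :=
  differentiableAt_of_deriv_ne_zero (h.deriv_ne_zero t ht)

theorem contDiffOn_deriv (h : IsRegularCurve γ x y) : ContDiffOn ℝ 1 (deriv γ) (Icc 0 1) := by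
  have huniq := uniqueDiffOn_Icc (zero_lt_one' ℝ)
  refine ((contDiffOn_succ_iff_derivWithin (n := 1) huniq).1 h.contDiffOn).2.2.congr ?_
  exact fun t ht => ((h.differentiableAt ht).derivWithin (huniq t ht)).symm

theorem comp_mul_left (h : IsRegularCurve γ x y) (hτ₀ : 0 < τ) (hτ₁ : τ ≤ 1) :
    IsRegularCurve (fun t => γ (τ * t)) x (γ τ) where
  contDiffOn := h.contDiffOn.comp (contDiff_const.mul contDiff_id).contDiffOn
    fun _ ht => ⟨mul_nonneg hτ₀.le ht.1, mul_le_one₀ hτ₁ ht.1 ht.2⟩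
  map_zero := by rw [mul_zero, h.map_zero]
  map_one := by rw [mul_one]
  deriv_ne_zero t ht := by
    rw [deriv_comp_mul_left]
    exact smul_ne_zero hτ₀.ne'
      (h.deriv_ne_zero _ ⟨mul_nonneg hτ₀.le ht.1, mul_le_one₀ hτ₁ ht.1 ht.2⟩)

end IsRegularCurve

namespace IsFinslerOn

theorem map_zero (hℓ : IsFinslerOn U ℓ) (x : E) : ℓ x 0 = 0 := by
  simpa using hℓ.smul x 0 0 le_rfl

theorem finslerLength_nonneg (hℓ : IsFinslerOn U ℓ) (γ : ℝ → E) : 0 ≤ finslerLength ℓ γ :=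
  intervalIntegral.integral_nonneg zero_le_one fun _ _ => hℓ.nonneg _ _

theorem finslerDist_le (hℓ : IsFinslerOn U ℓ) (h : IsRegularCurve γ x y) :
    finslerDist ℓ x y ≤ finslerLength ℓ γ :=
  csInf_le ⟨0, forall_mem_image.2 fun γ _ => hℓ.finslerLength_nonneg γ⟩ (mem_image_of_mem _ h)

theorem finslerLength_comp_mul_left (hℓ : IsFinslerOn U ℓ) (hτ : 0 ≤ τ) (γ : ℝ → E) :
    finslerLength ℓ (fun t => γ (τ * t)) = ∫ t in (0 : ℝ)..τ, ℓ (γ t) (deriv γ t) := by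
  simp only [finslerLength, deriv_comp_mul_left, hℓ.smul _ _ τ hτ,
    intervalIntegral.integral_const_mul]
  rw [intervalIntegral.mul_integral_comp_mul_left (f := fun t => ℓ (γ t) (deriv γ t)), mul_zero,
    mul_one]

theorem intervalIntegrable_tail (hℓ : IsFinslerOn U ℓ) (h : IsRegularCurve γ x y)
    (hb : b ∈ Icc (0 : ℝ) 1) (hU : MapsTo γ (Icc b 1) U) :
    IntervalIntegrable (fun t => ℓ (γ t) (deriv γ t)) volume b 1 := by
  have hsub : Icc b 1 ⊆ Icc 0 1 := Icc_subset_Icc_left hb.1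
  refine ContinuousOn.intervalIntegrable_of_Icc hb.2 fun t ht => ?_
  exact (hℓ.continuousAt _ (hU ht) _).comp_continuousWithinAt (f := fun t => (γ t, deriv γ t))
    (((h.contDiffOn.continuousOn.mono hsub) t ht).prodMk
      ((h.contDiffOn_deriv.continuousOn.mono hsub) t ht))

/- A divergent integral is `0`. Since the tail inside `U` is integrable, the length of `γ` can
vanish for this reason only together with the integral up to `b`. -/
theorem integral_le_finslerLength (hℓ : IsFinslerOn U ℓ) (h : IsRegularCurve γ x y)
    (hb : b ∈ Icc (0 : ℝ) 1) (hU : MapsTo γ (Icc b 1) U) :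
    ∫ t in (0 : ℝ)..b, ℓ (γ t) (deriv γ t) ≤ finslerLength ℓ γ := by
  by_cases hint : IntervalIntegrable (fun t => ℓ (γ t) (deriv γ t)) volume 0 b
  · rw [finslerLength,
      ← intervalIntegral.integral_add_adjacent_intervals hint (hℓ.intervalIntegrable_tail h hb hU)]
    exact le_add_of_nonneg_right
      (intervalIntegral.integral_nonneg hb.2 fun _ _ => hℓ.nonneg _ _)
  · rw [intervalIntegral.integral_undef hint]
    exact hℓ.finslerLength_nonneg γ

theorem finslerLength_le_add_integral (hℓ : IsFinslerOn U ℓ) (h : IsRegularCurve γ x y)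
    (hb : b ∈ Icc (0 : ℝ) 1) (hU : MapsTo γ (Icc b 1) U) (hσ : EqOn σ γ (Iic b)) {g : ℝ → ℝ}
    (hg : IntervalIntegrable g volume b 1) (hle : ∀ t ∈ Icc b 1, ℓ (σ t) (deriv σ t) ≤ g t) :
    finslerLength ℓ σ ≤ finslerLength ℓ γ + ∫ t in b..1, g t := by
  by_cases hint : IntervalIntegrable (fun t => ℓ (σ t) (deriv σ t)) volume 0 1
  · have hbI : b ∈ uIcc (0 : ℝ) 1 := by rwa [uIcc_of_le zero_le_one]
    have hhead := hint.mono_set (uIcc_subset_uIcc_left hbI)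
    have htail := hint.mono_set (uIcc_subset_uIcc_right hbI)
    rw [finslerLength, ← intervalIntegral.integral_add_adjacent_intervals hhead htail]
    refine add_le_add (le_of_eq_of_le ?_ (hℓ.integral_le_finslerLength h hb hU))
      (intervalIntegral.integral_mono_on hb.2 htail hg hle)
    refine intervalIntegral.integral_congr_Ioo_of_le hb.1 fun t ht => ?_
    have hev : σ =ᶠ[𝓝 t] γ := hσ.eventuallyEq_of_mem (Iic_mem_nhds ht.2)
    simp only [hσ ht.2.le, hev.deriv_eq]
  · rw [finslerLength, intervalIntegral.integral_undef hint]
    refine add_nonneg (hℓ.finslerLength_nonneg γ) ?_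
    exact intervalIntegral.integral_nonneg hb.2 fun t ht => (hℓ.nonneg _ _).trans (hle t ht)

end IsFinslerOn

section Bending

variable {φ ψ : ℝ → ℝ} {u w : E} {t : ℝ}

/-- A pair of cutoffs supported in `[b, ∞)`, used to modify the final part of a curve: adding
`φ t • w` moves the end point by `w`, and adding `ψ t • u` perturbs the velocity without moving the
end point. -/
structure IsBendingPair (b : ℝ) (φ ψ : ℝ → ℝ) : Prop where
  contDiff_left : ContDiff ℝ 2 φ
  contDiff_right : ContDiff ℝ 2 ψ
  monotone_left : Monotone φ
  eq_zero : ∀ t ≤ b, φ t = 0 ∧ ψ t = 0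
  left_one : φ 1 = 1
  right_one : ψ 1 = 0
  deriv_left : ∀ t, deriv ψ t = 0 → deriv φ t = 0
  deriv_right : ∀ t ∉ Ioo b 1, deriv ψ t = 0

/-- The curve `γ` modified by the cutoffs `φ`, `ψ` in the directions `w`, `u`. -/
def bend (γ : ℝ → E) (φ ψ : ℝ → ℝ) (w u : E) (t : ℝ) : E :=
  γ t + (φ t • w + ψ t • u)

/-- `γ` can be modified on arbitrarily short final intervals, by arbitrarily small `ψ t • u`, into
a regular curve whose end point is displaced by `w`. -/
def IsBendable (γ : ℝ → E) (w : E) : Prop :=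
  ∀ b ∈ Ico (0 : ℝ) 1, ∀ φ ψ, IsBendingPair b φ ψ →
    ∃ᶠ u in 𝓝 (0 : E), ∀ t ∈ Icc (0 : ℝ) 1, deriv γ t + (deriv φ t • w + deriv ψ t • u) ≠ 0

theorem exists_smooth_step (hb : b < 1) : ∃ θ : ℝ → ℝ, ContDiff ℝ 2 θ ∧ Monotone θ ∧
    (∀ t ≤ b, θ t = 0) ∧ θ 1 = 1 ∧ ∀ t ∉ Ioo b 1, deriv θ t = 0 := by
  have hb' : 0 < 1 - b := sub_pos.2 hb
  have hzero : ∀ t ≤ b, Real.smoothTransition ((t - b) / (1 - b)) = 0 := fun t ht =>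
    Real.smoothTransition.zero_of_nonpos (div_nonpos_of_nonpos_of_nonneg (sub_nonpos.2 ht) hb'.le)
  have hone : ∀ t ≥ 1, Real.smoothTransition ((t - b) / (1 - b)) = 1 := fun t ht =>
    Real.smoothTransition.one_of_one_le ((one_le_div hb').2 (by linarith))
  refine ⟨fun t => Real.smoothTransition ((t - b) / (1 - b)),
    Real.smoothTransition.contDiff.comp (by fun_prop), fun s t hst =>
      Real.smoothTransition.monotone (by gcongr), hzero, hone 1 le_rfl, fun t ht => ?_⟩
  rcases le_or_gt t b with htb | htb
  · exact IsLocalMin.deriv_eq_zero (.of_forall fun s => by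
      simpa only [hzero t htb] using Real.smoothTransition.nonneg _)
  · exact IsLocalMax.deriv_eq_zero (.of_forall fun s => by
      simpa only [hone t (not_lt.1 fun h => ht ⟨htb, h⟩)] using Real.smoothTransition.le_one _)

/- Both derivatives are multiples of `(1 - 2 * θ) * θ'`, the one of `φ` carrying the larger power of
`1 - 2 * θ`. -/
theorem exists_isBendingPair (hb : b < 1) : ∃ φ ψ, IsBendingPair b φ ψ := by
  obtain ⟨θ, hθ, hmono, hzero, hone, hderiv⟩ := exists_smooth_step hb
  have hdθ (t : ℝ) : HasDerivAt θ (deriv θ t) t := (hθ.differentiable two_ne_zero t).hasDerivAt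
  have hdφ (t : ℝ) : HasDerivAt (fun t => (1 - (1 - 2 * θ t) ^ 3) / 2)
      (3 * (1 - 2 * θ t) ^ 2 * deriv θ t) t := by
    convert! (((((hdθ t).const_mul 2).const_sub 1).pow 3).const_sub 1).div_const 2 using 1
    push_cast
    ring
  have hdψ (t : ℝ) : HasDerivAt (fun t => θ t * (1 - θ t)) ((1 - 2 * θ t) * deriv θ t) t := by
    convert! (hdθ t).mul ((hdθ t).const_sub 1) using 1
    ring
  refine ⟨fun t => (1 - (1 - 2 * θ t) ^ 3) / 2, fun t => θ t * (1 - θ t), ?_⟩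
  exact
    { contDiff_left := by fun_prop
      contDiff_right := by fun_prop
      monotone_left := fun s t hst => by
        have hcube := (Odd.strictMono_pow (R := ℝ) (by decide : Odd 3)).monotone
          (by linarith [hmono hst] : 1 - 2 * θ t ≤ 1 - 2 * θ s)
        dsimp only at hcube ⊢
        linarith
      eq_zero := fun t ht => by simp [hzero t ht]
      left_one := by norm_num [hone]
      right_one := by simp [hone]
      deriv_left := fun t ht => by
        rw [(hdψ t).deriv] at ht
        rw [(hdφ t).deriv]
        linear_combination 3 * (1 - 2 * θ t) * ht
      deriv_right := fun t ht => by rw [(hdψ t).deriv, hderiv t ht, mul_zero] }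

namespace IsBendingPair

theorem eqOn_bend (hφψ : IsBendingPair b φ ψ) (γ : ℝ → E) (w u : E) :
    EqOn (bend γ φ ψ w u) γ (Iic b) := fun t ht => by
  simp [bend, (hφψ.eq_zero t ht).1, (hφψ.eq_zero t ht).2]

theorem left_mem_Icc (hφψ : IsBendingPair b φ ψ) (ht : t ∈ Icc b 1) : φ t ∈ Icc (0 : ℝ) 1 :=
  ⟨(hφψ.eq_zero b le_rfl).1.ge.trans (hφψ.monotone_left ht.1),
    (hφψ.monotone_left ht.2).trans hφψ.left_one.le⟩

theorem hasDerivAt_bend (hφψ : IsBendingPair b φ ψ) (hγ : DifferentiableAt ℝ γ t) (w u : E) :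
    HasDerivAt (bend γ φ ψ w u) (deriv γ t + (deriv φ t • w + deriv ψ t • u)) t :=
  hγ.hasDerivAt.add
    (((hφψ.contDiff_left.differentiable two_ne_zero t).hasDerivAt.smul_const w).add
      ((hφψ.contDiff_right.differentiable two_ne_zero t).hasDerivAt.smul_const u))

theorem isRegularCurve_bend (hφψ : IsBendingPair b φ ψ) (h : IsRegularCurve γ x y) (hb : 0 ≤ b)
    (hne : ∀ t ∈ Icc (0 : ℝ) 1, deriv γ t + (deriv φ t • w + deriv ψ t • u) ≠ 0) :
    IsRegularCurve (bend γ φ ψ w u) x (y + w) where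
  contDiffOn := h.contDiffOn.add ((hφψ.contDiff_left.smul contDiff_const).add
    (hφψ.contDiff_right.smul contDiff_const)).contDiffOn
  map_zero := (hφψ.eqOn_bend γ w u hb).trans h.map_zero
  map_one := by simp [bend, h.map_one, hφψ.left_one, hφψ.right_one]
  deriv_ne_zero t ht := by
    rw [(hφψ.hasDerivAt_bend (h.differentiableAt ht) w u).deriv]
    exact hne t ht

end IsBendingPair

/- A vector `u` fails at time `t` only if `ψ' t ≠ 0` and `u = -(ψ' t)⁻¹ • (γ' t + φ' t • w)`. These
vectors form a `C¹` curve, which is negligible in dimension greater than one. -/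
theorem IsRegularCurve.isBendable [FiniteDimensional ℝ E] (hE : 1 < Module.finrank ℝ E)
    (h : IsRegularCurve γ x y) (w : E) : IsBendable γ w := by
  intro b hb φ ψ hφψ
  set bad : ℝ → E := fun t => -((deriv ψ t)⁻¹ • (deriv γ t + deriv φ t • w)) with hbad
  have hsmooth : ∀ t ∈ {t ∈ Ioo b 1 | deriv ψ t ≠ 0}, ContDiffAt ℝ 1 bad t := by
    rintro t ⟨ht, hψt⟩
    have hγt : ContDiffAt ℝ 1 (deriv γ) t :=
      h.contDiffOn_deriv.contDiffAt (Icc_mem_nhds (hb.1.trans_lt ht.1) ht.2)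
    have hφ' : ContDiff ℝ 1 (deriv φ) := (contDiff_succ_iff_deriv.1 hφψ.contDiff_left).2.2
    have hψ' : ContDiff ℝ 1 (deriv ψ) := (contDiff_succ_iff_deriv.1 hφψ.contDiff_right).2.2
    exact ((hψ'.contDiffAt.inv hψt).smul (hγt.add (hφ'.contDiffAt.smul contDiffAt_const))).neg
  have hdense := dense_compl_image_of_contDiffAt hE hsmooth
  refine (mem_closure_iff_frequently.1 (hdense 0)).mono fun u hu t ht hzero => ?_
  rcases eq_or_ne (deriv ψ t) 0 with hψt | hψt
  · refine h.deriv_ne_zero t ht ?_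
    simpa [hψt, hφψ.deriv_left t hψt] using hzero
  · refine hu ⟨t, ⟨by_contra fun htb => hψt (hφψ.deriv_right t htb), hψt⟩, ?_⟩
    have hsolve : deriv ψ t • u = -(deriv γ t + deriv φ t • w) :=
      eq_neg_of_add_eq_zero_right (by rwa [add_assoc])
    simp only [hbad, ← smul_neg, ← hsolve, inv_smul_smul₀ hψt]

theorem IsBendingPair.finslerLength_bend_le {r R M B : ℝ} (hφψ : IsBendingPair b φ ψ)
    (hℓ : IsFinslerOn U ℓ) (h : IsRegularCurve γ x y) (hb : b ∈ Icc (0 : ℝ) 1) (hR₀ : 0 ≤ R)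
    (hr : ball y r ⊆ U) (hR : ∀ z ∈ ball y r, ∀ v, ℓ z v ≤ R * ‖v‖)
    (hB : ∀ z ∈ ball y r, ℓ z w ≤ B) (hM : ∀ t ∈ Icc b 1, ‖deriv γ t‖ ≤ M)
    (hγ : ∀ t ∈ Icc b 1, ‖γ t - y‖ < (r - ‖w‖) / 2)
    (hu : ∀ t ∈ Icc b 1, ‖ψ t • u‖ < (r - ‖w‖) / 2 ∧ ‖deriv ψ t • u‖ < 1) :
    finslerLength ℓ (bend γ φ ψ w u) ≤ finslerLength ℓ γ + ((1 - b) * (R * (M + 1)) + B) := by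
  have hφ' : Continuous (deriv φ) := hφψ.contDiff_left.continuous_deriv one_le_two
  have htail : MapsTo γ (Icc b 1) U := fun t ht => hr <| by
    rw [mem_ball_iff_norm]
    linarith [hγ t ht, norm_nonneg (γ t - y), norm_nonneg w]
  have hball : ∀ t ∈ Icc b 1, bend γ φ ψ w u t ∈ ball y r := fun t ht => by
    have hφw : ‖φ t • w‖ ≤ ‖w‖ := by
      rw [norm_smul, Real.norm_of_nonneg (hφψ.left_mem_Icc ht).1]
      exact mul_le_of_le_one_left (norm_nonneg w) (hφψ.left_mem_Icc ht).2
    rw [mem_ball_iff_norm, bend, add_sub_right_comm]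
    linarith [norm_add_le (γ t - y) (φ t • w + ψ t • u), norm_add_le (φ t • w) (ψ t • u),
      hγ t ht, hu t ht]
  have hvelocity : ∀ t ∈ Icc b 1, ℓ (bend γ φ ψ w u t) (deriv (bend γ φ ψ w u) t) ≤
      R * (M + 1) + deriv φ t * B := fun t ht => by
    have hnorm : ‖deriv γ t + deriv ψ t • u‖ ≤ M + 1 :=
      (norm_add_le _ _).trans (add_le_add (hM t ht) (hu t ht).2.le)
    have hφt : 0 ≤ deriv φ t := hφψ.monotone_left.deriv_nonneg
    rw [(hφψ.hasDerivAt_bend (h.differentiableAt ⟨hb.1.trans ht.1, ht.2⟩) w u).deriv,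
      add_comm (deriv φ t • w), ← add_assoc]
    refine (hℓ.add_le _ _ _).trans (add_le_add ?_ ?_)
    · exact (hR _ (hball t ht) _).trans (mul_le_mul_of_nonneg_left hnorm hR₀)
    · rw [hℓ.smul _ _ _ hφt]
      exact mul_le_mul_of_nonneg_left (hB _ (hball t ht)) hφt
  have hint : IntervalIntegrable (deriv φ) volume b 1 := hφ'.intervalIntegrable _ _
  refine (hℓ.finslerLength_le_add_integral h hb htail (hφψ.eqOn_bend γ w u)
    (intervalIntegrable_const.add (hint.mul_const B)) hvelocity).trans_eq ?_
  rw [intervalIntegral.integral_add intervalIntegrable_const (hint.mul_const B),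
    intervalIntegral.integral_const, intervalIntegral.integral_mul_const,
    intervalIntegral.integral_deriv_eq_sub' φ rfl
      (fun t _ => hφψ.contDiff_left.differentiable two_ne_zero t) hφ'.continuousOn,
    hφψ.left_one, (hφψ.eq_zero b le_rfl).1, sub_zero, one_mul, smul_eq_mul]

theorem IsRegularCurve.exists_tail (h : IsRegularCurve γ x y) {κ ε : ℝ} (hκ : 0 < κ) (hε : 0 < ε)
    (K : ℝ) : ∃ b ∈ Ico (0 : ℝ) 1, (∀ t ∈ Icc b 1, ‖γ t - y‖ < κ) ∧ (1 - b) * K ≤ ε := by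
  have hclose : ∀ᶠ t in 𝓝 (1 : ℝ), ‖γ t - y‖ < κ := by
    have hcont := (h.differentiableAt (right_mem_Icc.2 zero_le_one)).continuousAt
    simpa only [h.map_one, mem_ball, dist_eq_norm] using hcont.eventually (ball_mem_nhds _ hκ)
  have hIcc : Tendsto (fun b : ℝ => Icc b 1) (𝓝 1) (𝓝 1).smallSets :=
    tendsto_id.Icc tendsto_const_nhds
  have hsmall : ∀ᶠ b in 𝓝 (1 : ℝ), (1 - b) * K < ε := by
    have hcont : Continuous fun b : ℝ => (1 - b) * K := by fun_prop
    exact hcont.continuousAt.eventually_lt_const (by simpa using hε)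
  have hnear : ∀ᶠ b in 𝓝[<] (1 : ℝ), (∀ t ∈ Icc b 1, ‖γ t - y‖ < κ) ∧ (1 - b) * K < ε :=
    ((hIcc.eventually (eventually_smallSets_forall.2 hclose)).and hsmall).filter_mono
      nhdsWithin_le_nhds
  obtain ⟨b, ⟨hb, hb'⟩, hbI⟩ := (hnear.and (Ico_mem_nhdsLT zero_lt_one)).exists
  exact ⟨b, hbI, hb, hb'.le⟩

theorem eventually_norm_smul_lt {f : ℝ → ℝ} (hf : Continuous f) {s : Set ℝ} (hs : IsCompact s)
    {κ : ℝ} (hκ : 0 < κ) : ∀ᶠ u in 𝓝 (0 : E), ∀ t ∈ s, ‖f t • u‖ < κ := by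
  refine hs.eventually_forall_of_forall_eventually fun t _ => ?_
  have hcont : Continuous fun q : E × ℝ => ‖f q.2 • q.1‖ := by fun_prop
  exact hcont.continuousAt.eventually_lt_const (by simpa using hκ)

theorem IsFinslerOn.finslerDist_le_of_isBendable {r R B : ℝ} (hℓ : IsFinslerOn U ℓ)
    (h : IsRegularCurve γ x y) (hw : IsBendable γ w) (hwr : ‖w‖ < r) (hR₀ : 0 ≤ R)
    (hr : ball y r ⊆ U) (hR : ∀ z ∈ ball y r, ∀ v, ℓ z v ≤ R * ‖v‖)
    (hB : ∀ z ∈ ball y r, ℓ z w ≤ B) : finslerDist ℓ x (y + w) ≤ finslerLength ℓ γ + B := by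
  refine le_of_forall_pos_le_add fun ε hε => ?_
  have hκ : 0 < (r - ‖w‖) / 2 := half_pos (sub_pos.2 hwr)
  obtain ⟨M, hM⟩ := isCompact_Icc.exists_bound_of_continuousOn h.contDiffOn_deriv.continuousOn
  obtain ⟨b, hb, hγ, hbε⟩ := h.exists_tail hκ hε (R * (M + 1))
  obtain ⟨φ, ψ, hφψ⟩ := exists_isBendingPair hb.2
  have hψ' : Continuous (deriv ψ) := hφψ.contDiff_right.continuous_deriv one_le_two
  obtain ⟨u, hne, hψu, hψ'u⟩ := ((hw b hb φ ψ hφψ).and_eventually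
    ((eventually_norm_smul_lt hφψ.contDiff_right.continuous isCompact_Icc hκ).and
      (eventually_norm_smul_lt hψ' isCompact_Icc one_pos))).exists
  have hlength := hφψ.finslerLength_bend_le (u := u) hℓ h ⟨hb.1, hb.2.le⟩ hR₀ hr hR hB
    (fun t ht => hM t ⟨hb.1.trans ht.1, ht.2⟩) hγ fun t ht => ⟨hψu t ht, hψ'u t ht⟩
  linarith [hℓ.finslerDist_le (hφψ.isRegularCurve_bend h hb.1 hne)]

end Bending

section DistanceEstimates

variable {w : E} {r R B : ℝ}

theorem IsFinslerOn.finslerDist_apply_le (hℓ : IsFinslerOn U ℓ) (h : IsRegularCurve γ x y)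
    (hτ : τ ∈ Ioc (0 : ℝ) 1) (hU : MapsTo γ (Icc τ 1) U) :
    finslerDist ℓ x (γ τ) ≤ finslerLength ℓ γ :=
  calc finslerDist ℓ x (γ τ) ≤ finslerLength ℓ (fun t => γ (τ * t)) :=
        hℓ.finslerDist_le (h.comp_mul_left hτ.1 hτ.2)
    _ = ∫ t in (0 : ℝ)..τ, ℓ (γ t) (deriv γ t) := hℓ.finslerLength_comp_mul_left hτ.1.le γ
    _ ≤ finslerLength ℓ γ := hℓ.integral_le_finslerLength h ⟨hτ.1.le, hτ.2⟩ hU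

theorem isBendable_of_forall_deriv_pos (f : StrongDual ℝ E)
    (hf : ∀ t ∈ Icc (0 : ℝ) 1, 0 < f (deriv γ t)) (hw : 0 ≤ f w) : IsBendable γ w := by
  intro b _ φ ψ hφψ
  refine Frequently.filter_mono (frequently_pure.2 fun t ht hzero => ?_) (pure_le_nhds 0)
  have hpos : 0 < f (deriv γ t) + deriv φ t * f w :=
    add_pos_of_pos_of_nonneg (hf t ht) (mul_nonneg hφψ.monotone_left.deriv_nonneg hw)
  refine hpos.ne' ?_
  simpa using congrArg f hzero

namespace IsRegularCurve

theorem hasDerivAt_dual (h : IsRegularCurve γ x y) (f : StrongDual ℝ E) {t : ℝ}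
    (ht : t ∈ Icc (0 : ℝ) 1) : HasDerivAt (fun t => f (γ t)) (f (deriv γ t)) t :=
  f.hasFDerivAt.comp_hasDerivAt t (h.differentiableAt ht).hasDerivAt

/- By Darboux's theorem the velocity, being nonzero, has a constant sign, which the mean value
theorem determines. -/
theorem exists_dual_deriv_pos (h : IsRegularCurve γ x y) (hxy : x ≠ y)
    (hE : Module.finrank ℝ E = 1) : ∃ f : StrongDual ℝ E,
      f (y - x) = 1 ∧ (∀ z, f z • (y - x) = z) ∧ ∀ t ∈ Icc (0 : ℝ) 1, 0 < f (deriv γ t) := by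
  have he : y - x ≠ 0 := sub_ne_zero.2 hxy.symm
  obtain ⟨f, hf⟩ := SeparatingDual.exists_eq_one (R := ℝ) he
  have hcoord : ∀ z, f z • (y - x) = z := fun z => by
    obtain ⟨c, rfl⟩ := (finrank_eq_one_iff_of_nonzero' _ he).1 hE z
    rw [map_smul, hf, smul_eq_mul, mul_one]
  refine ⟨f, hf, hcoord, ?_⟩
  have hne : ∀ t ∈ Icc (0 : ℝ) 1, f (deriv γ t) ≠ 0 := fun t ht hzero =>
    h.deriv_ne_zero t ht (by rw [← hcoord (deriv γ t), hzero, zero_smul])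
  obtain ⟨t, ht, hft⟩ := exists_hasDerivAt_eq_slope (fun t => f (γ t)) (fun t => f (deriv γ t))
    zero_lt_one (fun t ht => (h.hasDerivAt_dual f ht).continuousAt.continuousWithinAt)
    fun t ht => h.hasDerivAt_dual f (Ioo_subset_Icc_self ht)
  have hft_pos : 0 < f (deriv γ t) := by
    rw [hft, h.map_zero, h.map_one, ← map_sub, hf]
    norm_num
  exact (hasDerivWithinAt_forall_lt_or_forall_gt_of_forall_ne (convex_Icc 0 1)
    (fun t ht => (h.hasDerivAt_dual f ht).hasDerivWithinAt) hne).resolve_left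
      fun hneg => (hneg t (Ioo_subset_Icc_self ht)).not_gt hft_pos

theorem exists_eq_add_of_forall_deriv_pos (h : IsRegularCurve γ x y) {f : StrongDual ℝ E}
    (hfxy : f (y - x) = 1) (hcoord : ∀ z, f z • (y - x) = z)
    (hf : ∀ t ∈ Icc (0 : ℝ) 1, 0 < f (deriv γ t)) (hw : f w ∈ Ioc (-1) 0) :
    ∃ τ ∈ Ioc (0 : ℝ) 1, γ τ = y + w ∧ ∀ t ∈ Icc τ 1, ‖γ t - y‖ ≤ ‖w‖ := by
  have hcont : ContinuousOn (fun t => f (γ t)) (Icc 0 1) :=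
    f.continuous.comp_continuousOn h.contDiffOn.continuousOn
  have hmono : MonotoneOn (fun t => f (γ t)) (Icc 0 1) := by
    refine (strictMonoOn_of_deriv_pos (convex_Icc 0 1) hcont fun t ht => ?_).monotoneOn
    rw [(h.hasDerivAt_dual f (interior_subset ht)).deriv]
    exact hf t (interior_subset ht)
  have hvalue : f y + f w ∈ Ioc (f (γ 0)) (f (γ 1)) := by
    rw [h.map_zero, h.map_one]
    rw [map_sub] at hfxy
    exact ⟨by linarith [hw.1], by linarith [hw.2]⟩
  obtain ⟨τ, hτ, hfτ⟩ := intermediate_value_Ioc zero_le_one hcont hvalue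
  refine ⟨τ, hτ, ?_, fun t ht => ?_⟩
  · rw [← hcoord (γ τ), ← hcoord (y + w), map_add, ← hfτ]
  · have hlower := hmono (Ioc_subset_Icc_self hτ) ⟨hτ.1.le.trans ht.1, ht.2⟩ ht.1
    have hupper := hmono ⟨hτ.1.le.trans ht.1, ht.2⟩ (right_mem_Icc.2 zero_le_one) ht.2
    have hcompare : ‖f (γ t - y)‖ ≤ ‖f w‖ := by
      simp only [hfτ, h.map_one] at hlower hupper
      rw [map_sub, Real.norm_of_nonpos hw.2, Real.norm_of_nonpos (by linarith)]
      linarith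
    rw [← hcoord (γ t - y), ← hcoord w, norm_smul, norm_smul]
    exact mul_le_mul_of_nonneg_right hcompare (norm_nonneg _)

end IsRegularCurve

theorem IsFinslerOn.finslerDist_le_finslerLength_add_of_finrank_eq_one (hℓ : IsFinslerOn U ℓ)
    (hE : Module.finrank ℝ E = 1) (h : IsRegularCurve γ x y) (hx : x ∉ U) (hr : ball y r ⊆ U)
    (hwr : ‖w‖ < r) (hR₀ : 0 ≤ R) (hR : ∀ z ∈ ball y r, ∀ v, ℓ z v ≤ R * ‖v‖)
    (hB : ∀ z ∈ ball y r, ℓ z w ≤ B) : finslerDist ℓ x (y + w) ≤ finslerLength ℓ γ + B := by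
  have hwxy : ‖w‖ < ‖y - x‖ := by
    refine hwr.trans_le (not_lt.1 fun hlt => hx (hr ?_))
    rwa [mem_ball_iff_norm']
  have hxy : x ≠ y := fun hxy => by simp [hxy, (norm_nonneg w).not_gt] at hwxy
  obtain ⟨f, hfxy, hcoord, hf⟩ := h.exists_dual_deriv_pos hxy hE
  rcases le_total 0 (f w) with hfw | hfw
  · exact hℓ.finslerDist_le_of_isBendable h (isBendable_of_forall_deriv_pos f hf hfw) hwr hR₀ hr
      hR hB
  · have hfw_gt : -1 < f w := by
      rw [← hcoord w, norm_smul, Real.norm_of_nonpos hfw] at hwxy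
      linarith [(mul_lt_iff_lt_one_left (norm_pos_iff.2 (sub_ne_zero.2 hxy.symm))).1 hwxy]
    obtain ⟨τ, hτ, hγτ, htail⟩ := h.exists_eq_add_of_forall_deriv_pos hfxy hcoord hf ⟨hfw_gt, hfw⟩
    have hB₀ : 0 ≤ B := (hℓ.nonneg y w).trans (hB y (mem_ball_self ((norm_nonneg w).trans_lt hwr)))
    rw [← hγτ]
    refine (hℓ.finslerDist_apply_le h hτ fun t ht => hr ?_).trans (le_add_of_nonneg_right hB₀)
    exact mem_ball_iff_norm.2 ((htail t ht).trans_lt hwr)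

theorem IsFinslerOn.finslerDist_add_le [FiniteDimensional ℝ E] (hℓ : IsFinslerOn U ℓ) (hx : x ∉ U)
    (hr : ball y r ⊆ U) (hwr : ‖w‖ < r) (hR₀ : 0 ≤ R)
    (hR : ∀ z ∈ ball y r, ∀ v, ℓ z v ≤ R * ‖v‖) (hB : ∀ z ∈ ball y r, ℓ z w ≤ B) :
    finslerDist ℓ x (y + w) ≤ finslerDist ℓ x y + B := by
  have hxy : x ≠ y := by
    rintro rfl
    exact hx (hr (mem_ball_self ((norm_nonneg w).trans_lt hwr)))
  have : Nontrivial E := nontrivial_of_ne x y hxy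
  rw [← sub_le_iff_le_add]
  refine le_csInf ⟨_, mem_image_of_mem _ (isRegularCurve_lineMap hxy)⟩ ?_
  rintro _ ⟨γ, h, rfl⟩
  rw [sub_le_iff_le_add]
  rcases (Nat.succ_le_of_lt Module.finrank_pos : 1 ≤ Module.finrank ℝ E).lt_or_eq' with hE | hE
  · exact hℓ.finslerDist_le_of_isBendable h (h.isBendable hE w) hwr hR₀ hr hR hB
  · exact hℓ.finslerDist_le_finslerLength_add_of_finrank_eq_one hE h hx hr hwr hR₀ hR hB

theorem IsFinslerOn.exists_ball_le_mul_norm [FiniteDimensional ℝ E] (hℓ : IsFinslerOn U ℓ)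
    (hU : IsOpen U) (hy : y ∈ U) : ∃ r > 0, ∃ R ≥ 0, ball y r ⊆ U ∧
      ∀ z ∈ ball y r, ∀ v, ℓ z v ≤ R * ‖v‖ := by
  have hcont : ContinuousOn (ℓ y) (sphere 0 1) := fun v _ =>
    ((hℓ.continuousAt y hy v).comp (f := fun v => (y, v)) (by fun_prop)).continuousWithinAt
  obtain ⟨R, hR⟩ := (isCompact_sphere (0 : E) 1).exists_bound_of_continuousOn hcont
  have hunit : ∀ᶠ z in 𝓝 y, ∀ v ∈ sphere (0 : E) 1, ℓ z v < |R| + 1 := by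
    refine (isCompact_sphere 0 1).eventually_forall_of_forall_eventually fun v hv => ?_
    refine (hℓ.continuousAt y hy v).eventually_lt_const ?_
    linarith [Real.le_norm_self (ℓ y v), hR v hv, le_abs_self R]
  obtain ⟨r, hr, hball⟩ := eventually_nhds_iff_ball.1 ((hU.eventually_mem hy).and hunit)
  refine ⟨r, hr, |R| + 1, by positivity, fun z hz => (hball z hz).1, fun z hz v => ?_⟩
  rcases eq_or_ne v 0 with rfl | hv
  · rw [hℓ.map_zero, norm_zero, mul_zero]
  · have hdir := (hball z hz).2 (‖v‖⁻¹ • v) (by simp [norm_smul, hv])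
    rw [hℓ.smul _ _ _ (by positivity), inv_mul_lt_iff₀ (norm_pos_iff.2 hv)] at hdir
    exact hdir.le.trans_eq (mul_comm _ _)

theorem IsFinslerOn.locallyLipschitzOn_finslerDist [FiniteDimensional ℝ E]
    (hℓ : IsFinslerOn U ℓ) (hU : IsOpen U) (hx : x ∉ U) :
    LocallyLipschitzOn U (finslerDist ℓ x) := by
  intro y hy
  obtain ⟨r, hr, R, hR₀, hball, hR⟩ := hℓ.exists_ball_le_mul_norm hU hy
  refine ⟨⟨R, hR₀⟩, ball y (r / 3), mem_nhdsWithin_of_mem_nhds (ball_mem_nhds y (by positivity)),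
    LipschitzOnWith.of_le_add_mul _ fun z hz z' hz' => ?_⟩
  rw [mem_ball] at hz hz'
  have hsub : ball z' (2 / 3 * r) ⊆ ball y r := ball_subset_ball' (by linarith)
  have hdist : ‖z - z'‖ < 2 / 3 * r := by
    rw [← dist_eq_norm]
    linarith [dist_triangle_right z z' y]
  have key := hℓ.finslerDist_add_le hx (hsub.trans hball) hdist hR₀
    (fun q hq => hR q (hsub hq)) fun q hq => hR q (hsub hq) (z - z')
  rwa [add_sub_cancel, ← dist_eq_norm] at key

theorem IsFinslerOn.fderiv_finslerDist_le [FiniteDimensional ℝ E] (hℓ : IsFinslerOn U ℓ)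
    (hU : IsOpen U) (hx : x ∉ U) (hy : y ∈ U) {f : StrongDual ℝ E}
    (hf : HasFDerivAt (finslerDist ℓ x) f y) (v : E) : f v ≤ ℓ y v := by
  refine le_of_forall_gt_imp_ge_of_dense fun c hc => ?_
  obtain ⟨R₁, hR₁, R, hR₀, hball, hR⟩ := hℓ.exists_ball_le_mul_norm hU hy
  have hcont : ContinuousAt (fun z => ℓ z v) y :=
    (hℓ.continuousAt y hy v).comp (f := fun z => (z, v)) (by fun_prop)
  obtain ⟨R₂, hR₂, hc'⟩ := eventually_nhds_iff_ball.1 (hcont.eventually_lt_const hc)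
  have hline : HasDerivAt (fun t : ℝ => finslerDist ℓ x (y + t • v)) (f v) 0 := by
    have hdir : HasDerivAt (fun t : ℝ => y + t • v) v 0 := by
      simpa using ((hasDerivAt_id (0 : ℝ)).smul_const v).const_add y
    exact HasFDerivAt.comp_hasDerivAt (0 : ℝ) (by simpa using hf) hdir
  refine le_of_hasDerivAt_of_eventually_le hline ?_
  have hsmall : ∀ᶠ ε in 𝓝 (0 : ℝ), ‖ε • v‖ < min R₁ R₂ := by
    have hcont : Continuous fun ε : ℝ => ‖ε • v‖ := by fun_prop
    exact hcont.continuousAt.eventually_lt_const (by simpa using lt_min hR₁ hR₂)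
  filter_upwards [hsmall.filter_mono nhdsWithin_le_nhds, self_mem_nhdsWithin] with ε hε hpos
  have hsub₁ := ball_subset_ball (x := y) (min_le_left R₁ R₂)
  have hsub₂ := ball_subset_ball (x := y) (min_le_right R₁ R₂)
  simpa using hℓ.finslerDist_add_le hx (hsub₁.trans hball) hε hR₀ (fun z hz => hR z (hsub₁ hz))
    fun z hz => (hℓ.smul z v ε (le_of_lt hpos)).trans_le
      (mul_le_mul_of_nonneg_left (hc' z (hsub₂ hz)).le (le_of_lt hpos))

end DistanceEstimates

end Curves

section SupportFunctions

variable {E : Type*} [NormedAddCommGroup E] [InnerProductSpace ℝ E] {K : Set E} {s : E → ℝ}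

/-- `s` is the support function of `K`, and its defining supremum is attained in every
direction. -/
def IsSupportFunction (K : Set E) (s : E → ℝ) : Prop :=
  ∀ v, IsGreatest ((fun ξ => ⟪ξ, v⟫) '' K) (s v)

namespace IsSupportFunction

theorem inner_le (hs : IsSupportFunction K s) {ξ : E} (hξ : ξ ∈ K) (v : E) : ⟪ξ, v⟫ ≤ s v :=
  (hs v).2 (mem_image_of_mem _ hξ)

theorem exists_eq (hs : IsSupportFunction K s) (v : E) : ∃ ξ ∈ K, ⟪ξ, v⟫ = s v :=
  (hs v).1

theorem nonneg (hs : IsSupportFunction K s) (hK : 0 ∈ K) (v : E) : 0 ≤ s v := by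
  simpa using hs.inner_le hK v

theorem map_smul (hs : IsSupportFunction K s) {c : ℝ} (hc : 0 ≤ c) (v : E) :
    s (c • v) = c * s v := by
  refine (hs (c • v)).unique ⟨?_, ?_⟩
  · obtain ⟨ξ, hξ, hξv⟩ := hs.exists_eq v
    exact ⟨ξ, hξ, by simp only [real_inner_smul_right, hξv]⟩
  · rintro _ ⟨ξ, hξ, rfl⟩
    exact (real_inner_smul_right ξ v c).trans_le
      (mul_le_mul_of_nonneg_left (hs.inner_le hξ v) hc)

theorem map_add_le (hs : IsSupportFunction K s) (v w : E) : s (v + w) ≤ s v + s w := by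
  obtain ⟨ξ, hξ, hξv⟩ := hs.exists_eq (v + w)
  rw [← hξv, inner_add_right]
  exact add_le_add (hs.inner_le hξ v) (hs.inner_le hξ w)

theorem mem_of_forall_inner_le [CompleteSpace E] (hs : IsSupportFunction K s)
    (hconv : Convex ℝ K) (hclosed : IsClosed K) {ξ : E} (hξ : ∀ v, ⟪ξ, v⟫ ≤ s v) : ξ ∈ K := by
  by_contra hξK
  obtain ⟨f, c, hlt, hgt⟩ := geometric_hahn_banach_closed_point hconv hclosed hξK
  set v : E := (InnerProductSpace.toDual ℝ E).symm f with hv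
  have hf (ζ : E) : f ζ = ⟪ζ, v⟫ := by
    rw [real_inner_comm, hv, InnerProductSpace.toDual_symm_apply]
  obtain ⟨ζ, hζ, hζv⟩ := hs.exists_eq v
  linarith [hξ v, hlt ζ hζ, hf ζ, hf ξ]

end IsSupportFunction

theorem isSupportFunction_singleton_zero : IsSupportFunction ({0} : Set E) fun _ => 0 := fun v => by
  simp [isGreatest_singleton]

end SupportFunctions

section ConvexFunctions

variable {E : Type*} [NormedAddCommGroup E] [InnerProductSpace ℝ E] [CompleteSpace E] {h : E → ℝ}

theorem add_inner_gradient_le_of_convexOn (hh : ConvexOn ℝ univ h) {p : E}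
    (hp : DifferentiableAt ℝ h p) (q : E) : h p + ⟪gradient h p, q - p⟫ ≤ h q := by
  have hconv : ConvexOn ℝ univ (h ∘ AffineMap.lineMap p q) := hh.comp_affineMap _
  have hderiv : HasDerivAt (h ∘ AffineMap.lineMap p q) ⟪gradient h p, q - p⟫ (0 : ℝ) := by
    have hgrad := hp.hasGradientAt.hasFDerivAt
    rw [← AffineMap.lineMap_apply_zero (k := ℝ) p q] at hgrad
    simpa using hgrad.comp_hasDerivAt (0 : ℝ) AffineMap.hasDerivAt_lineMap
  have hslope := hconv.le_slope_of_hasDerivAt (mem_univ 0) (mem_univ 1) one_pos hderiv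
  simp only [slope_def_field, Function.comp_apply, AffineMap.lineMap_apply_zero,
    AffineMap.lineMap_apply_one, sub_zero, div_one] at hslope
  linarith

theorem isBounded_sublevel_of_gradient_surjective (hh : ConvexOn ℝ univ h)
    (hgrad : ∀ v ≠ 0, ∃ ξ, gradient h ξ = v) (c : ℝ) : Bornology.IsBounded {ξ | h ξ ≤ c} := by
  have hdir (v : E) : ∃ C, ∀ ξ ∈ {ξ | h ξ ≤ c}, ⟪ξ, v⟫ ≤ C := by
    rcases eq_or_ne v 0 with rfl | hv
    · exact ⟨0, fun ξ _ => (inner_zero_right ξ).le⟩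
    · obtain ⟨p, rfl⟩ := hgrad v hv
      have hp : DifferentiableAt ℝ h p := by
        contrapose! hv
        exact gradient_eq_zero_of_not_differentiableAt hv
      refine ⟨c - h p + ⟪gradient h p, p⟫, fun ξ hξ => ?_⟩
      have hle := (add_inner_gradient_le_of_convexOn hh hp ξ).trans hξ
      rw [inner_sub_right, real_inner_comm ξ] at hle
      linarith
  choose C hC using hdir
  obtain ⟨R, hR⟩ := banach_steinhaus (g := fun ξ : {ξ | h ξ ≤ c} => innerSL ℝ (ξ : E)) fun v => by
    refine ⟨max (C v) (C (-v)), fun ξ => abs_le'.2 ⟨(hC v ξ ξ.2).trans (le_max_left _ _), ?_⟩⟩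
    rw [innerSL_apply_apply, ← inner_neg_right]
    exact (hC (-v) ξ ξ.2).trans (le_max_right _ _)
  exact isBounded_iff_forall_norm_le.2 ⟨R, fun ξ hξ => by simpa using hR ⟨ξ, hξ⟩⟩

/- By the gradient inequality at `ξ`, the sublevel set lies in the half-space `⟪· - ξ, v⟫ ≤ 0`. -/
theorem isSupportFunction_sublevel_of_gradient (hh : ConvexOn ℝ univ h) (h_zero : h 0 ≤ 0)
    {s : E → ℝ} (hs_zero : s 0 = 0)
    (hs : ∀ v ≠ 0, ∃ c : ℝ, 0 < c ∧ ∃ ξ, gradient h ξ = c • v ∧ h ξ = 0 ∧ s v = ⟪ξ, v⟫) :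
    IsSupportFunction {ξ | h ξ ≤ 0} s := by
  intro v
  rcases eq_or_ne v 0 with rfl | hv
  · refine ⟨⟨0, h_zero, (inner_zero_right 0).trans hs_zero.symm⟩, ?_⟩
    rintro _ ⟨ξ, -, rfl⟩
    simp only [inner_zero_right, hs_zero, le_refl]
  · obtain ⟨c, hc, p, hgrad, hp, hsv⟩ := hs v hv
    have hdiff : DifferentiableAt ℝ h p := by
      by_contra hnot
      rw [gradient_eq_zero_of_not_differentiableAt hnot] at hgrad
      exact smul_ne_zero hc.ne' hv hgrad.symm
    refine ⟨⟨p, hp.le, hsv.symm⟩, ?_⟩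
    rintro _ ⟨ξ, hξ, rfl⟩
    have hle := (add_inner_gradient_le_of_convexOn hh hdiff ξ).trans hξ
    rw [hp, hgrad, zero_add, real_inner_smul_left, real_inner_comm, inner_sub_left] at hle
    rw [hsv]
    exact sub_nonpos.1 (nonpos_of_mul_nonpos_right hle hc)

end ConvexFunctions

section Hamiltonians

variable {X E : Type*} [TopologicalSpace X] [NormedAddCommGroup E] [InnerProductSpace ℝ E]
  {H : X → E → ℝ} {s : X → E → ℝ} {x : X} {c : ℝ}

theorem eventually_sublevel_subset_closedBall [FiniteDimensional ℝ E]
    (hcont : Continuous fun q : X × E => H q.1 q.2) (hconv : ∀ y, ConvexOn ℝ univ (H y))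
    (hx : H x 0 < 0) (hbdd : Bornology.IsBounded {ξ | H x ξ ≤ 0}) :
    ∃ R, ∀ᶠ y in 𝓝 x, {ξ | H y ξ ≤ 0} ⊆ closedBall 0 R := by
  obtain ⟨R, hR, hsub⟩ := hbdd.exists_pos_norm_lt
  refine ⟨R, ?_⟩
  have hsphere : ∀ᶠ y in 𝓝 x, ∀ ξ ∈ sphere (0 : E) R, 0 < H y ξ := by
    refine (isCompact_sphere 0 R).eventually_forall_of_forall_eventually fun ξ hξ => ?_
    refine hcont.continuousAt.eventually_const_lt (not_le.1 fun hle => ?_)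
    exact (hsub ξ hle).ne (mem_sphere_zero_iff_norm.1 hξ)
  have hzero : ∀ᶠ y in 𝓝 x, H y 0 < 0 :=
    (hcont.comp (Continuous.prodMk_left 0)).continuousAt.eventually_lt_const hx
  filter_upwards [hsphere, hzero] with y hpos hneg ξ hξ
  rw [mem_closedBall_zero_iff]
  by_contra! hlt
  have hnorm : 0 < ‖ξ‖ := hR.trans hlt
  have hratio : R / ‖ξ‖ ∈ Icc (0 : ℝ) 1 := ⟨by positivity, (div_le_one hnorm).2 hlt.le⟩
  have hmem : (R / ‖ξ‖) • ξ ∈ {ξ ∈ univ | H y ξ ≤ 0} :=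
    ((hconv y).convex_le 0).smul_mem_of_zero_mem ⟨mem_univ _, hneg.le⟩ ⟨mem_univ _, hξ⟩ hratio
  refine (hpos _ ?_).not_ge hmem.2
  rw [mem_sphere_zero_iff_norm, norm_smul, Real.norm_of_nonneg hratio.1,
    div_mul_cancel₀ _ hnorm.ne']

/- A maximizer for `(x, v)`, slightly contracted towards the interior point `0`, is admissible at
all nearby points. -/
theorem eventually_lt_support (hcont : Continuous fun q : X × E => H q.1 q.2)
    (hconv : ConvexOn ℝ univ (H x)) (hx : H x 0 < 0)
    (hs : ∀ᶠ y in 𝓝 x, IsSupportFunction {ξ | H y ξ ≤ 0} (s y)) {v : E} (hc : c < s x v) :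
    ∀ᶠ q : X × E in 𝓝 (x, v), c < s q.1 q.2 := by
  obtain ⟨ξ, hξ, hξv⟩ := hs.self_of_nhds.exists_eq v
  obtain ⟨t, ht, ht₀, ht₁⟩ : ∃ t : ℝ, c < ⟪t • ξ, v⟫ ∧ 0 ≤ t ∧ t < 1 := by
    have hline : Continuous fun t : ℝ => ⟪t • ξ, v⟫ := by fun_prop
    have hnear : ∀ᶠ t in 𝓝[<] (1 : ℝ), c < ⟪t • ξ, v⟫ :=
      (hline.continuousAt.eventually_const_lt (by simpa [hξv] using hc)).filter_mono
        nhdsWithin_le_nhds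
    exact (hnear.and (Ico_mem_nhdsLT zero_lt_one)).exists
  have hinterior : H x (t • ξ) < 0 := by
    have hle := hconv.2 (mem_univ ξ) (mem_univ 0) ht₀ (sub_nonneg.2 ht₁.le) (by ring)
    simp only [smul_zero, add_zero, smul_eq_mul] at hle
    exact hle.trans_lt (add_neg_of_nonpos_of_neg (mul_nonpos_of_nonneg_of_nonpos ht₀ hξ)
      (mul_neg_of_pos_of_neg (sub_pos.2 ht₁) hx))
  have hadm : ∀ᶠ q : X × E in 𝓝 (x, v), H q.1 (t • ξ) < 0 :=
    (hcont.comp (continuous_fst.prodMk continuous_const)).continuousAt.eventually_lt_const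
      hinterior
  have hvalue : ∀ᶠ q : X × E in 𝓝 (x, v), c < ⟪t • ξ, q.2⟫ :=
    Tendsto.eventually_const_lt ht (ContinuousAt.tendsto (by fun_prop))
  filter_upwards [hadm, hvalue, continuousAt_fst.eventually hs] with q hq hcq hsq
  exact hcq.trans_le (hsq.inner_le hq.le q.2)

theorem eventually_support_lt [FiniteDimensional ℝ E]
    (hcont : Continuous fun q : X × E => H q.1 q.2) (hconv : ∀ y, ConvexOn ℝ univ (H y))
    (hx : H x 0 < 0) (hbdd : Bornology.IsBounded {ξ | H x ξ ≤ 0})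
    (hs : ∀ᶠ y in 𝓝 x, IsSupportFunction {ξ | H y ξ ≤ 0} (s y)) {v : E} (hc : s x v < c) :
    ∀ᶠ q : X × E in 𝓝 (x, v), s q.1 q.2 < c := by
  obtain ⟨R, hR⟩ := eventually_sublevel_subset_closedBall hcont hconv hx hbdd
  have hforall : ∀ᶠ q : X × E in 𝓝 (x, v), ∀ ξ ∈ closedBall (0 : E) R,
      H q.1 ξ ≤ 0 → ⟪ξ, q.2⟫ < c := by
    refine (isCompact_closedBall 0 R).eventually_forall_of_forall_eventually fun ξ _ => ?_
    rcases le_or_gt (H x ξ) 0 with hξ | hξ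
    · have hinner : Continuous fun z : (X × E) × E => ⟪z.2, z.1.2⟫ := by fun_prop
      exact ((hinner.tendsto ((x, v), ξ)).eventually_lt_const
        ((hs.self_of_nhds.inner_le hξ v).trans_lt hc)).mono fun _ hz _ => hz
    · have hH : Continuous fun z : (X × E) × E => H z.1.1 z.2 :=
        hcont.comp (f := fun z : (X × E) × E => (z.1.1, z.2)) (by fun_prop)
      exact ((hH.tendsto ((x, v), ξ)).eventually_const_lt hξ).mono fun _ hz hle =>
        absurd hle hz.not_ge
  filter_upwards [hforall, continuousAt_fst.eventually hs, continuousAt_fst.eventually hR] with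
    q hq hsq hRq
  obtain ⟨ξ, hξ, hξv⟩ := hsq.exists_eq q.2
  exact hξv ▸ hq ξ (hRq hξ) hξ

theorem continuousAt_support [FiniteDimensional ℝ E]
    (hcont : Continuous fun q : X × E => H q.1 q.2) (hconv : ∀ y, ConvexOn ℝ univ (H y))
    (hx : H x 0 < 0) (hbdd : Bornology.IsBounded {ξ | H x ξ ≤ 0})
    (hs : ∀ᶠ y in 𝓝 x, IsSupportFunction {ξ | H y ξ ≤ 0} (s y)) (v : E) :
    ContinuousAt (fun q : X × E => s q.1 q.2) (x, v) :=
  tendsto_order.2 ⟨fun _ hc => eventually_lt_support hcont (hconv x) hx hs hc,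
    fun _ hc => eventually_support_lt hcont hconv hx hbdd hs hc⟩

end Hamiltonians

section EikonalInequality

variable {E : Type*} [NormedAddCommGroup E] [InnerProductSpace ℝ E] [FiniteDimensional ℝ E]
  {H ℓ : E → E → ℝ} {U : Set E} {x y ξ : E}

theorem isFinslerOn_of_isSupportFunction (hU : IsOpen U)
    (hcont : Continuous fun q : E × E => H q.1 q.2) (hconv : ∀ y, ConvexOn ℝ univ (H y))
    (hneg : ∀ y ∈ U, H y 0 < 0) (hbdd : ∀ y ∈ U, Bornology.IsBounded {ξ | H y ξ ≤ 0})
    (hℓ : ∀ y ∈ U, IsSupportFunction {ξ | H y ξ ≤ 0} (ℓ y)) (hℓ_zero : ∀ y ∉ U, ∀ v, ℓ y v = 0) :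
    IsFinslerOn U ℓ := by
  have hsupp (y : E) : ∃ K : Set E, 0 ∈ K ∧ IsSupportFunction K (ℓ y) := by
    by_cases hy : y ∈ U
    · exact ⟨_, (hneg y hy).le, hℓ y hy⟩
    · rw [funext (hℓ_zero y hy)]
      exact ⟨{0}, rfl, isSupportFunction_singleton_zero⟩
  choose K hK hs using hsupp
  exact
    { nonneg := fun y => (hs y).nonneg (hK y)
      smul := fun y v _ hc => (hs y).map_smul hc v
      add_le := fun y => (hs y).map_add_le
      continuousAt := fun y hy => continuousAt_support hcont hconv (hneg y hy) (hbdd y hy)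
        ((hU.eventually_mem hy).mono hℓ) }

theorem hamiltonian_nonpos_of_hasGradientAt_finslerDist (hU : IsOpen U)
    (hcont : Continuous fun q : E × E => H q.1 q.2) (hconv : ∀ y, ConvexOn ℝ univ (H y))
    (hF : IsFinslerOn U ℓ) (hℓ : ∀ y ∈ U, IsSupportFunction {ξ | H y ξ ≤ 0} (ℓ y)) (hx : x ∉ U)
    (hy : y ∈ U) (hξ : HasGradientAt (finslerDist ℓ x) ξ y) : H y ξ ≤ 0 := by
  have hclosed : IsClosed {ξ | H y ξ ≤ 0} :=
    isClosed_le (hcont.comp (Continuous.prodMk_right y)) continuous_const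
  refine (hℓ y hy).mem_of_forall_inner_le (by simpa using (hconv y).convex_le 0) hclosed fun v => ?_
  simpa using hF.fderiv_finslerDist_le hU hx hy hξ.hasFDerivAt v

theorem ae_hamiltonian_gradient_finslerDist_nonpos [MeasurableSpace E] [BorelSpace E]
    (μ : Measure E) [μ.IsAddHaarMeasure] (hU : IsOpen U)
    (hcont : Continuous fun q : E × E => H q.1 q.2) (hconv : ∀ y, ConvexOn ℝ univ (H y))
    (hF : IsFinslerOn U ℓ) (hℓ : ∀ y ∈ U, IsSupportFunction {ξ | H y ξ ≤ 0} (ℓ y)) (hx : x ∉ U) :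
    ∀ᵐ y ∂μ, y ∈ U → DifferentiableAt ℝ (finslerDist ℓ x) y ∧
      H y (gradient (finslerDist ℓ x) y) ≤ 0 := by
  filter_upwards [ae_differentiableAt_of_locallyLipschitzOn μ hU
    (hF.locallyLipschitzOn_finslerDist hU hx)] with y hdiff hy
  exact ⟨hdiff hy, hamiltonian_nonpos_of_hasGradientAt_finslerDist hU hcont hconv hF hℓ hx hy
    (hdiff hy).hasGradientAt⟩

end EikonalInequality

section CoshHamiltonian

theorem cosh_le_exp_of_abs_le {s r : ℝ} (h : |s| ≤ r) : Real.cosh s ≤ Real.exp r := by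
  rw [← Real.cosh_abs, Real.cosh_eq]
  linarith [Real.exp_le_exp.2 h, Real.exp_le_exp.2 (show -|s| ≤ r by linarith [abs_nonneg s])]

theorem convexOn_cosh : ConvexOn ℝ univ Real.cosh := by
  have hneg : ConvexOn ℝ univ fun s : ℝ => Real.exp (-s) :=
    convexOn_exp.comp_linearMap (-LinearMap.id)
  have hsum := (convexOn_exp.add hneg).smul (c := (2 : ℝ)⁻¹) (by norm_num)
  refine hsum.congr fun s _ => ?_
  simp [Real.cosh_eq, div_eq_inv_mul]

theorem convexOn_tsum {ι F : Type*} [AddCommGroup F] [Module ℝ F] {s : Set F} {f : ι → F → ℝ}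
    (hs : Convex ℝ s) (hf : ∀ i, ConvexOn ℝ s (f i))
    (hsum : ∀ p ∈ s, Summable fun i => f i p) : ConvexOn ℝ s fun p => ∑' i, f i p := by
  refine ⟨hs, fun p hp q hq a b ha hb hab => ?_⟩
  have hp' := (hsum p hp).const_smul a
  have hq' := (hsum q hq).const_smul b
  rw [← (hsum p hp).tsum_const_smul, ← (hsum q hq).tsum_const_smul, ← hp'.tsum_add hq']
  exact (hsum _ (hs hp hq ha hb hab)).tsum_le_tsum (fun i => (hf i).2 hp hq ha hb hab)
    (hp'.add hq')

variable {ι X E : Type*} [NormedAddCommGroup E] [InnerProductSpace ℝ E]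
  {k : ι → E} {a : ι → X → ℝ} {V : X → ℝ}

/-- The Hamiltonian `H(x, ξ) = -∑ᵢ aᵢ(x) cosh (kᵢ · ξ) - V(x)` with frequencies `k`, coefficients
`a` and potential `V`. -/
def coshHamiltonian (k : ι → E) (a : ι → X → ℝ) (V : X → ℝ) (x : X) (ξ : E) : ℝ :=
  -(∑' i, a i x * Real.cosh ⟪k i, ξ⟫) - V x

theorem coshHamiltonian_zero {x : X} (h : HasSum (fun i => a i x) 0) :
    coshHamiltonian k a V x 0 = -V x := by
  simp [coshHamiltonian, h.tsum_eq]

theorem norm_mul_cosh_inner_le {s m c : ℝ} {p ξ : E} (hs : |s| ≤ m) (hξ : ‖ξ‖ ≤ c) :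
    ‖s * Real.cosh ⟪p, ξ⟫‖ ≤ Real.exp (c * ‖p‖) * m := by
  have hinner : |⟪p, ξ⟫| ≤ c * ‖p‖ := by
    rw [mul_comm]
    exact (abs_real_inner_le_norm p ξ).trans (mul_le_mul_of_nonneg_left hξ (norm_nonneg p))
  rw [norm_mul, mul_comm, Real.norm_of_nonneg (Real.cosh_pos _).le]
  exact mul_le_mul (cosh_le_exp_of_abs_le hinner) hs (norm_nonneg s) (Real.exp_pos _).le

variable [TopologicalSpace X]

/-- The coefficients `a` decay faster than every exponential of the frequencies `k`, uniformly on
compact sets. -/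
def LocallyExpSummable (k : ι → E) (a : ι → X → ℝ) : Prop :=
  ∀ c > 0, ∀ K, IsCompact K → ∃ M : ι → ℝ, (∀ i, ∀ x ∈ K, |a i x| ≤ M i) ∧
    Summable fun i => Real.exp (c * ‖k i‖) * M i

namespace LocallyExpSummable

theorem summable_mul_cosh (ha : LocallyExpSummable k a) (x : X) (ξ : E) :
    Summable fun i => a i x * Real.cosh ⟪k i, ξ⟫ := by
  obtain ⟨M, hM, hsum⟩ := ha (‖ξ‖ + 1) (by positivity) {x} isCompact_singleton
  exact .of_norm_bounded hsum fun i => norm_mul_cosh_inner_le (hM i x rfl) (by linarith)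

theorem continuous_coshHamiltonian [WeaklyLocallyCompactSpace X] (ha : LocallyExpSummable k a)
    (hac : ∀ i, Continuous (a i)) (hV : Continuous V) :
    Continuous fun q : X × E => coshHamiltonian k a V q.1 q.2 := by
  refine Continuous.sub (continuous_iff_continuousAt.2 fun ⟨x, ξ⟩ => ?_).neg
    (hV.comp continuous_fst)
  obtain ⟨K, hK, hxK⟩ := exists_compact_mem_nhds x
  obtain ⟨M, hM, hsum⟩ := ha (‖ξ‖ + 1) (by positivity) K hK
  have hnhds : K ×ˢ ball 0 (‖ξ‖ + 1) ∈ 𝓝 (x, ξ) :=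
    prod_mem_nhds hxK (isOpen_ball.mem_nhds (by simp))
  refine (continuousOn_tsum (fun i => ?_) hsum fun i q hq => ?_).continuousAt hnhds
  · have := hac i
    have := Real.continuous_cosh
    fun_prop
  · exact norm_mul_cosh_inner_le (hM i q.1 hq.1) (mem_ball_zero_iff.1 hq.2).le

theorem convexOn_coshHamiltonian (ha : LocallyExpSummable k a)
    (hneg : ∀ i, k i ≠ 0 → ∀ x, a i x ≤ 0) (x : X) :
    ConvexOn ℝ univ (coshHamiltonian k a V x) := by
  have hterm (i : ι) : ConvexOn ℝ univ fun ξ => -(a i x * Real.cosh ⟪k i, ξ⟫) := by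
    by_cases hi : k i = 0
    · simpa [hi] using convexOn_const (-a i x) convex_univ
    · have hcosh : ConvexOn ℝ univ fun ξ : E => Real.cosh ⟪k i, ξ⟫ :=
        convexOn_cosh.comp_linearMap (innerₗ E (k i))
      simpa [neg_mul] using hcosh.smul (neg_nonneg.2 (hneg i hi x))
  refine ((convexOn_tsum convex_univ hterm fun ξ _ => (ha.summable_mul_cosh x ξ).neg).add_const
    (-V x)).congr fun ξ _ => ?_
  simp only [coshHamiltonian, Pi.add_apply, tsum_neg, sub_eq_add_neg]

end LocallyExpSummable

end CoshHamiltonian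

theorem zv_zero {d : ℕ} : (zv 0 : Ed d) = 0 := by
  ext i
  simp [zv]

theorem stmt14_general {E : Type*} [DecidableEq E] [NormedAddCommGroup E] [InnerProductSpace ℝ E]
    [FiniteDimensional ℝ E] [MeasurableSpace E] [BorelSpace E] (μ : Measure E)
    [μ.IsAddHaarMeasure] (H : E → E → ℝ) (hcont : Continuous fun q : E × E => H q.1 q.2)
    (hconv : ∀ x, ConvexOn ℝ univ (H x)) (hH_nonpos : ∀ x, H x 0 ≤ 0)
    (hH_zero : ∀ x, H x 0 = 0 → x = 0) (ξh : E → E → E)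
    (hξh : ∀ x v, gradient (H x) (ξh x v) = v) (lam : E → E → ℝ)
    (hlam : ∀ x, x ≠ 0 → ∀ v, v ≠ 0 → 0 < lam x v ∧ H x (ξh x (lam x v • v)) = 0)
    (ℓ : E → E → ℝ)
    (hℓ : ∀ x v, ℓ x v = if x = 0 ∨ v = 0 then 0 else ⟪ξh x (lam x v • v), v⟫) :
    (∀ x, x ≠ 0 → ∀ ξ, HasGradientAt (finslerDist ℓ 0) ξ x → H x ξ ≤ 0) ∧
      LocallyLipschitzOn {0}ᶜ (finslerDist ℓ 0) ∧
      ∀ᵐ x ∂μ, DifferentiableAt ℝ (finslerDist ℓ 0) x ∧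
        H x (gradient (finslerDist ℓ 0) x) ≤ 0 := by
  have hU : IsOpen ({0}ᶜ : Set E) := isOpen_compl_singleton
  have hsupp : ∀ x ∈ ({0}ᶜ : Set E), IsSupportFunction {ξ | H x ξ ≤ 0} (ℓ x) := fun x hx =>
    isSupportFunction_sublevel_of_gradient (hconv x) (hH_nonpos x) (by simp [hℓ]) fun v hv =>
      ⟨lam x v, (hlam x hx v hv).1, _, hξh x _, (hlam x hx v hv).2,
        (hℓ x v).trans (if_neg (not_or.2 ⟨hx, hv⟩))⟩
  have hF : IsFinslerOn {0}ᶜ ℓ :=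
    isFinslerOn_of_isSupportFunction hU hcont hconv
      (fun x hx => (hH_nonpos x).lt_of_ne fun h => hx (hH_zero x h))
      (fun x _ => isBounded_sublevel_of_gradient_surjective (hconv x)
        (fun v _ => ⟨_, hξh x v⟩) 0) hsupp
      fun x hx v => (hℓ x v).trans (if_pos (.inl (not_not.1 hx)))
  have h0 : (0 : E) ∉ ({0}ᶜ : Set E) := not_not.2 rfl
  refine ⟨fun x hx ξ hξ => hamiltonian_nonpos_of_hasGradientAt_finslerDist hU hcont hconv hF hsupp
    h0 hx hξ, hF.locallyLipschitzOn_finslerDist hU h0, ?_⟩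
  rcases subsingleton_or_nontrivial E with hE | hE
  · refine .of_forall fun x => ⟨(hasFDerivAt_of_subsingleton _ x).differentiableAt, ?_⟩
    rw [Subsingleton.elim (gradient (finslerDist ℓ 0) x) 0]
    exact hH_nonpos x
  · filter_upwards [ae_hamiltonian_gradient_finslerDist_nonpos μ hU hcont hconv hF hsupp h0,
      μ.ae_ne 0] with x hx hx₀ using hx hx₀

/-- Theorem 1.5, eikonal inequality: at every point `x ≠ 0` where the Finsler distance
`d⁰(x) = d_ℓ(0,x)` is differentiable, `h̃₀(x, ∇d⁰(x)) ≤ 0`; in particular (since `d⁰` is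
locally Lipschitz) the inequality holds almost everywhere in `ℝ^d`. -/
theorem stmt14 (d : ℕ) (a : (Fin d → ℤ) → Ed d → ℝ) (V₀ : Ed d → ℝ)
    (hsm : ∀ η : Fin d → ℤ, ContDiff ℝ (⊤ : ℕ∞) (a η))
    (hneg : ∀ η : Fin d → ℤ, η ≠ 0 → ∀ x : Ed d, a η x ≤ 0)
    (heven : ∀ (η : Fin d → ℤ) (x : Ed d), a η x = a (-η) x)
    (hzero : ∀ x : Ed d, HasSum (fun η : Fin d → ℤ => a η x) 0)
    (hspan : ∀ x : Ed d,
      Submodule.span ℝ {w : Ed d | ∃ η : Fin d → ℤ, a η x < 0 ∧ w = zv η} = ⊤)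
    (hdecay : ∀ c : ℝ, 0 < c → ∀ K : Set (Ed d), IsCompact K → ∀ n : ℕ,
      ∃ M : (Fin d → ℤ) → ℝ,
        (∀ η : Fin d → ℤ, ∀ x ∈ K, ‖iteratedFDeriv ℝ n (a η) x‖ ≤ M η) ∧
        Summable (fun η : Fin d → ℤ => Real.exp (c * ‖zv η‖) * M η))
    (hVsm : ContDiff ℝ (⊤ : ℕ∞) V₀)
    (hVpos : ∀ x : Ed d, 0 ≤ V₀ x)
    (hVzero : ∀ x : Ed d, V₀ x = 0 ↔ x = 0)
    (hVnd : ∀ v : Ed d, v ≠ 0 → 0 < iteratedFDeriv ℝ 2 V₀ 0 ![v, v])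
    (h0 : Ed d → Ed d → ℝ)
    (hh0 : ∀ x ξ : Ed d,
      h0 x ξ = -(∑' η : Fin d → ℤ, a η x * Real.cosh ⟪zv η, ξ⟫) - V₀ x)
    (ξh : Ed d → Ed d → Ed d)
    (hξh1 : ∀ x v : Ed d, gradient (h0 x) (ξh x v) = v)
    (hξh2 : ∀ x ξ : Ed d, ξh x (gradient (h0 x) ξ) = ξ)
    (lam : Ed d → Ed d → ℝ)
    (hlam : ∀ x : Ed d, x ≠ 0 → ∀ v : Ed d, v ≠ 0 →
      0 < lam x v ∧ h0 x (ξh x (lam x v • v)) = 0)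
    (ℓ : Ed d → Ed d → ℝ)
    (hℓ : ∀ x v : Ed d,
      ℓ x v = if x = 0 ∨ v = 0 then 0 else ⟪ξh x (lam x v • v), v⟫)
    (dl : Ed d → Ed d → ℝ)
    (hdl : ∀ x y : Ed d, dl x y = sInf {L : ℝ | ∃ γ : ℝ → Ed d,
      ContDiffOn ℝ 2 γ (Set.Icc 0 1) ∧ γ 0 = x ∧ γ 1 = y ∧
      (∀ t ∈ Set.Icc (0:ℝ) 1, deriv γ t ≠ 0) ∧
      L = ∫ t in (0:ℝ)..1, ℓ (γ t) (deriv γ t)}) :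
    (∀ x : Ed d, x ≠ 0 → ∀ ξ : Ed d,
        HasGradientAt (fun y : Ed d => dl 0 y) ξ x → h0 x ξ ≤ 0)
    ∧ ∀ᵐ x : Ed d ∂MeasureTheory.volume,
        h0 x (gradient (fun y : Ed d => dl 0 y) x) ≤ 0 := by
  obtain rfl : h0 = coshHamiltonian zv a V₀ := funext₂ hh0
  obtain rfl : dl = finslerDist ℓ :=
    funext₂ fun x y => (hdl x y).trans (finslerDist_eq_sInf ℓ x y).symm
  have hsummable : LocallyExpSummable zv a := fun c hc K hK => by
    simpa only [norm_iteratedFDeriv_zero, Real.norm_eq_abs] using hdecay c hc K hK 0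
  have hH (x : Ed d) : coshHamiltonian zv a V₀ x 0 = -V₀ x := coshHamiltonian_zero (hzero x)
  have heikonal := stmt14_general volume (coshHamiltonian zv a V₀)
    (hsummable.continuous_coshHamiltonian (fun η => (hsm η).continuous) hVsm.continuous)
    (hsummable.convexOn_coshHamiltonian fun η hη => hneg η fun h => hη (h ▸ zv_zero))
    (fun x => (hH x).trans_le (neg_nonpos.2 (hVpos x)))
    (fun x hx => (hVzero x).1 (neg_eq_zero.1 ((hH x).symm.trans hx))) ξh hξh1 lam hlam ℓ hℓ
  exact ⟨heikonal.1, heikonal.2.2.mono fun _ h => h.2⟩
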